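/- Let μ be a compactly supported Borel probability measure on ℝ^d and r > 0. If ∫∫ |μ̂(rξ)|² |μ̂(θξ)|² dθ dξ < ∞ (integrating θ over the orthogonal group with Haar probability measure), then there exists θ ∈ O_d(ℝ) such that the support A_{r,θ} of the convolution μ_r * μ^θ has positive Lebesgue measure, with L^d(A_{r,θ}) ≥ 1/∫∫(μ_r * μ^θ)² dx dθ. -/

import Mathlib

open MeasureTheory

noncomputable def fourierMeasure {d : ℕ} (μ : Measure (Fin d → ℝ)) (ξ : Fin d → ℝ) : ℂ :=
  ∫ x, Complex.exp (-(2 * Real.pi * Complex.I * (∑ i, x i * ξ i))) ∂μ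

/-- The support of a measure: points all of whose neighborhoods have positive measure. -/
def measureSupport {α : Type*} [TopologicalSpace α] [MeasurableSpace α] (μ : Measure α) :
    Set α := {x | ∀ U ∈ nhds x, μ U ≠ 0}

/-- The convolution of two measures on `ℝ^d`. -/
noncomputable def measConv {d : ℕ} (μ ν : Measure (Fin d → ℝ)) : Measure (Fin d → ℝ) :=
  Measure.map (fun p : (Fin d → ℝ) × (Fin d → ℝ) => p.1 + p.2) (μ.prod ν)


instance {d : ℕ} : MeasurableSpace (Matrix (Fin d) (Fin d) ℝ) :=
  (inferInstance : MeasurableSpace (Fin d → Fin d → ℝ))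

/-! Two applications of the Cauchy–Schwarz inequality. Tested against a smooth cutoff between a
compact set `C` and an open set `U ⊇ C`, Parseval's identity gives `m C ^ 2 ≤ E * volume U`, where
`E` is the squared `L²` norm of `m̂`; hence `E < ∞` forces `m ≪ volume`. The Fourier transform of
`μ_r * μ^θ` at `ξ` is `μ̂(rξ) μ̂(θ⁻¹ξ)`, and Haar measure is invariant under `θ ↦ θ⁻¹` up to null
sets, so `μ_r * μ^θ ≪ volume` for almost every `θ`. For such `θ`, if `f` is the density and `S` the
support, then `1 = (∫_S f)² ≤ volume S * ∫ f²`; it remains to choose `θ` with `∫ f²` at most its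
average. -/

open ProbabilityTheory
open scoped ENNReal FourierTransform SchwartzMap

theorem lintegral_mul_sq_le {α : Type*} [MeasurableSpace α] {μ : Measure α} {f g : α → ℝ≥0∞}
    (hf : AEMeasurable f μ) (hg : AEMeasurable g μ) :
    (∫⁻ a, f a * g a ∂μ) ^ 2 ≤ (∫⁻ a, f a ^ 2 ∂μ) * ∫⁻ a, g a ^ 2 ∂μ := by
  have sq_sqrt (x : ℝ≥0∞) : (x ^ (1 / 2 : ℝ)) ^ 2 = x := by
    rw [← ENNReal.rpow_natCast, ← ENNReal.rpow_mul]
    norm_num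
  have holder := ENNReal.lintegral_mul_le_Lp_mul_Lq μ Real.HolderConjugate.two_two hf hg
  simpa only [Pi.mul_apply, mul_pow, sq_sqrt, ENNReal.rpow_two] using pow_le_pow_left' holder 2

section Support

variable {Ω X : Type*} [MeasurableSpace X] (ρ : Measure X) [SigmaFinite ρ]

theorem measureSupport_eq_support [TopologicalSpace X] (m : Measure X) :
    measureSupport m = m.support := by
  ext x
  simp only [measureSupport, Set.mem_ofPred_eq, Measure.mem_support_iff_forall, pos_iff_ne_zero]

theorem measure_univ_sq_le_measure_mul_lintegral_rnDeriv_sq {m : Measure X} [SFinite m]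
    (hm : m ≪ ρ) {s : Set X} (hs : m sᶜ = 0) :
    m Set.univ ^ 2 ≤ ρ s * ∫⁻ x, m.rnDeriv ρ x ^ 2 ∂ρ := by
  have mass : ∫⁻ x in s, m.rnDeriv ρ x ∂ρ = m Set.univ := by
    rw [Measure.setLIntegral_rnDeriv hm, measure_of_measure_compl_eq_zero hs]
  calc m Set.univ ^ 2 = (∫⁻ x in s, 1 * m.rnDeriv ρ x ∂ρ) ^ 2 := by simp only [one_mul, mass]
    _ ≤ (∫⁻ _ in s, 1 ^ 2 ∂ρ) * ∫⁻ x in s, m.rnDeriv ρ x ^ 2 ∂ρ :=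
      lintegral_mul_sq_le aemeasurable_const (Measure.measurable_rnDeriv m ρ).aemeasurable
    _ ≤ ρ s * ∫⁻ x, m.rnDeriv ρ x ^ 2 ∂ρ := by
      gcongr
      · simp only [one_pow, setLIntegral_one, le_refl]
      · exact Measure.restrict_le_self

variable [MeasurableSpace Ω] [MeasurableSpace.CountablyGenerated X]

/- `Kernel.rnDeriv` is a density only relative to finite kernels, so `ρ` is first replaced by an
equivalent finite measure. -/
theorem exists_measurable_ae_eq_rnDeriv (κ : Kernel Ω X) [IsFiniteKernel κ] :
    ∃ f : Ω × X → ℝ≥0∞, Measurable f ∧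
      ∀ ω, (κ ω).rnDeriv ρ =ᵐ[ρ] fun x => f (ω, x) := by
  let τ := ρ.toFinite
  have hρτ : ρ ≪ τ := absolutelyContinuous_toFinite ρ
  have hτρ : τ ≪ ρ := toFinite_absolutelyContinuous ρ
  refine ⟨fun p => Kernel.rnDeriv κ (Kernel.const Ω τ) p.1 p.2 * τ.rnDeriv ρ p.2,
    (Kernel.measurable_rnDeriv κ _).mul ((Measure.measurable_rnDeriv τ ρ).comp measurable_snd),
    fun ω => ?_⟩
  have kernel_eq : Kernel.rnDeriv κ (Kernel.const Ω τ) ω =ᵐ[ρ] (κ ω).rnDeriv τ :=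
    hρτ.ae_le (Kernel.rnDeriv_eq_rnDeriv_measure (κ := κ) (η := Kernel.const Ω τ))
  have chain_rule : (κ ω).rnDeriv τ * τ.rnDeriv ρ =ᵐ[ρ] (κ ω).rnDeriv ρ :=
    hρτ.ae_le (Measure.rnDeriv_mul_rnDeriv' hτρ)
  filter_upwards [kernel_eq, chain_rule] with x kernel_eq_x chain_rule_x
  rw [kernel_eq_x, ← chain_rule_x, Pi.mul_apply]

theorem measurable_lintegral_rnDeriv_sq (κ : Kernel Ω X) [IsFiniteKernel κ] :
    Measurable fun ω => ∫⁻ x, (κ ω).rnDeriv ρ x ^ 2 ∂ρ := by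
  obtain ⟨f, hf, hκf⟩ := exists_measurable_ae_eq_rnDeriv ρ κ
  have congr_density (ω : Ω) : ∫⁻ x, (κ ω).rnDeriv ρ x ^ 2 ∂ρ = ∫⁻ x, f (ω, x) ^ 2 ∂ρ :=
    lintegral_congr_ae ((hκf ω).fun_comp (· ^ 2))
  simpa only [congr_density] using (hf.pow_const 2).lintegral_prod_right'

theorem exists_one_le_measure_measureSupport_mul [TopologicalSpace X] [HereditarilyLindelofSpace X]
    (ν : Measure Ω) [IsProbabilityMeasure ν] (κ : Kernel Ω X) [IsMarkovKernel κ]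
    (hκ : ∀ᵐ ω ∂ν, κ ω ≪ ρ) :
    ∃ ω, 1 ≤ ρ (measureSupport (κ ω)) * ∫⁻ ω', ∫⁻ x, (κ ω').rnDeriv ρ x ^ 2 ∂ρ ∂ν := by
  obtain ⟨ω, hω, le_mean⟩ := exists_notMem_null_le_lintegral
    (measurable_lintegral_rnDeriv_sq ρ κ).aemeasurable (ae_iff.1 hκ)
  have null_compl : κ ω (measureSupport (κ ω))ᶜ = 0 := by
    rw [measureSupport_eq_support]
    exact Measure.measure_compl_support
  refine ⟨ω, ?_⟩
  calc (1 : ℝ≥0∞) = κ ω Set.univ ^ 2 := by rw [measure_univ, one_pow]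
    _ ≤ ρ (measureSupport (κ ω)) * ∫⁻ x, (κ ω).rnDeriv ρ x ^ 2 ∂ρ :=
      measure_univ_sq_le_measure_mul_lintegral_rnDeriv_sq ρ (not_not.1 hω) null_compl
    _ ≤ ρ (measureSupport (κ ω)) * ∫⁻ ω', ∫⁻ x, (κ ω').rnDeriv ρ x ^ 2 ∂ρ ∂ν := by gcongr

end Support

section FourierEnergy

variable {V : Type*} [NormedAddCommGroup V]

theorem exists_contDiff_hasCompactSupport_indicator_le_le (n : ℕ∞) [NormedSpace ℝ V]
    [FiniteDimensional ℝ V] {C U : Set V} (hC : IsCompact C) (hU : IsOpen U) (hCU : C ⊆ U) :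
    ∃ f : V → ℝ, ContDiff ℝ n f ∧ HasCompactSupport f ∧ C.indicator 1 ≤ f ∧ f ≤ U.indicator 1 := by
  obtain ⟨K, hK, hCK, hKU⟩ := exists_compact_between hC hU hCU
  obtain ⟨f, smooth, range_f, supp, eq_one⟩ := exists_contMDiff_support_eq_eq_one_iff
    (n := n) (modelWithCornersSelf ℝ V) isOpen_interior hC.isClosed hCK
  have unit_interval (x : V) : f x ∈ Set.Icc 0 1 := range_f ⟨x, rfl⟩
  refine ⟨f, smooth.contDiff, .of_support_subset_isCompact hK (supp ▸ interior_subset),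
    Set.indicator_le' (fun x hx => ((eq_one x).1 hx).ge) fun x _ => (unit_interval x).1,
    Set.le_indicator (fun x _ => (unit_interval x).2) fun x hx => ?_⟩
  refine (Function.notMem_support.1 fun hfx => hx (hKU (interior_subset ?_))).le
  exact supp ▸ hfx

variable [InnerProductSpace ℝ V] [MeasurableSpace V] [BorelSpace V]

/-- The squared `L²` norm of the Fourier transform `ξ ↦ ∫ exp (-2πi⟪x, ξ⟫) ∂m(x)` of `m`, which in
terms of Mathlib's characteristic function is `ξ ↦ charFun m (-2πξ)`. -/
noncomputable def fourierEnergy [FiniteDimensional ℝ V] (m : Measure V) : ℝ≥0∞ :=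
  ∫⁻ ξ, ‖charFun m (-(2 * Real.pi) • ξ)‖ₑ ^ 2

variable [FiniteDimensional ℝ V] (m : Measure V) [IsFiniteMeasure m]

theorem integral_fourier_eq_integral_charFun_mul {φ : V → ℂ} (hφ : Integrable φ) :
    ∫ x, 𝓕 φ x ∂m = ∫ ξ, charFun m (-(2 * Real.pi) • ξ) * φ ξ := by
  have charFun_eq (ξ : V) : charFun m (-(2 * Real.pi) • ξ) =
      VectorFourier.fourierIntegral 𝐞 m (innerₗ V) (fun _ => 1) ξ := by
    rw [charFun_eq_fourierIntegral', ← Pi.one_def, smul_smul, neg_mul_neg,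
      inv_mul_cancel₀ Real.two_pi_pos.ne', one_smul]
  have swap := VectorFourier.integral_fourierIntegral_smul_eq_flip (μ := m) (ν := volume)
    (L := innerₗ V) Real.continuous_fourierChar continuous_inner (integrable_const 1) hφ
  simp only [flip_innerₗ, smul_eq_mul, one_mul] at swap
  simp only [charFun_eq]
  exact swap.symm

theorem lintegral_enorm_sq_fourier_schwartz (φ : 𝓢(V, ℂ)) :
    ∫⁻ ξ, ‖𝓕 φ ξ‖ₑ ^ 2 = ∫⁻ x, ‖φ x‖ₑ ^ 2 := by
  have lintegral_eq (g : 𝓢(V, ℂ)) : ∫⁻ x, ‖g x‖ₑ ^ 2 = ENNReal.ofReal (∫ x, ‖g x‖ ^ 2) := by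
    have integrable_sq : Integrable fun x => ‖g x‖ ^ 2 :=
      (memLp_two_iff_integrable_sq_norm g.continuous.aestronglyMeasurable).1 (g.memLp 2)
    rw [ofReal_integral_eq_lintegral_ofReal integrable_sq (.of_forall fun x => sq_nonneg _)]
    simp only [ENNReal.ofReal_pow (norm_nonneg _), ofReal_norm]
  rw [lintegral_eq, lintegral_eq, SchwartzMap.integral_norm_sq_fourier]

theorem enorm_integral_schwartz_sq_le (ψ : 𝓢(V, ℂ)) :
    ‖∫ x, ψ x ∂m‖ₑ ^ 2 ≤ fourierEnergy m * ∫⁻ x, ‖ψ x‖ₑ ^ 2 := by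
  obtain ⟨φ, rfl⟩ : ∃ φ : 𝓢(V, ℂ), 𝓕 φ = ψ := ⟨𝓕⁻ ψ, by simp⟩
  calc ‖∫ x, 𝓕 φ x ∂m‖ₑ ^ 2
      = ‖∫ ξ, charFun m (-(2 * Real.pi) • ξ) * φ ξ‖ₑ ^ 2 := by
        rw [SchwartzMap.fourier_coe, integral_fourier_eq_integral_charFun_mul m φ.integrable]
    _ ≤ (∫⁻ ξ, ‖charFun m (-(2 * Real.pi) • ξ)‖ₑ * ‖φ ξ‖ₑ) ^ 2 := by
        gcongr
        simpa only [enorm_mul] using enorm_integral_le_lintegral_enorm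
          fun ξ => charFun m (-(2 * Real.pi) • ξ) * φ ξ
    _ ≤ fourierEnergy m * ∫⁻ ξ, ‖φ ξ‖ₑ ^ 2 :=
        lintegral_mul_sq_le (measurable_charFun.comp (measurable_const_smul _)).enorm.aemeasurable
          φ.continuous.enorm.aemeasurable
    _ = fourierEnergy m * ∫⁻ x, ‖𝓕 φ x‖ₑ ^ 2 := by rw [lintegral_enorm_sq_fourier_schwartz]

theorem measure_sq_le_fourierEnergy_mul_of_isOpen {C U : Set V} (hC : IsCompact C) (hU : IsOpen U)
    (hCU : C ⊆ U) : m C ^ 2 ≤ fourierEnergy m * volume U := by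
  obtain ⟨f, smooth, compact_supp, one_le, le_one⟩ :=
    exists_contDiff_hasCompactSupport_indicator_le_le ⊤ hC hU hCU
  have nonneg (x : V) : 0 ≤ f x := (Set.indicator_nonneg (by simp) x).trans (one_le x)
  have complex_supp : HasCompactSupport fun x => (f x : ℂ) :=
    compact_supp.comp_left (g := Complex.ofReal) rfl
  let ψ : 𝓢(V, ℂ) := complex_supp.toSchwartzMap (Complex.ofRealCLM.contDiff.comp smooth)
  have enorm_ψ (x : V) : ‖ψ x‖ₑ = ENNReal.ofReal (f x) := by
    rw [← ofReal_norm, ← Real.norm_of_nonneg (nonneg x), ← Complex.norm_real]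
    rfl
  have measure_le : m C ≤ ‖∫ x, ψ x ∂m‖ₑ := by
    calc m C = ∫⁻ x, ENNReal.ofReal (C.indicator 1 x) ∂m := by
          rw [← lintegral_indicator_one hC.measurableSet]
          refine lintegral_congr fun x => ?_
          by_cases hx : x ∈ C <;> simp [hx]
      _ ≤ ∫⁻ x, ENNReal.ofReal (f x) ∂m := by gcongr with x; exact one_le x
      _ = ‖∫ x, f x ∂m‖ₑ := by
          rw [Real.enorm_of_nonneg (integral_nonneg nonneg), ofReal_integral_eq_lintegral_ofReal
            (smooth.continuous.integrable_of_hasCompactSupport compact_supp) (.of_forall nonneg)]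
      _ = ‖∫ x, ψ x ∂m‖ₑ := by
          rw [← ofReal_norm, ← Complex.norm_real, ofReal_norm, ← integral_complex_ofReal]
          rfl
  have lintegral_le : ∫⁻ x, ‖ψ x‖ₑ ^ 2 ≤ volume U := by
    rw [← lintegral_indicator_one hU.measurableSet]
    refine lintegral_mono fun x => ?_
    rw [enorm_ψ]
    refine (pow_le_pow_left' (ENNReal.ofReal_le_ofReal (le_one x)) 2).trans_eq ?_
    by_cases hx : x ∈ U <;> simp [hx]
  calc m C ^ 2 ≤ ‖∫ x, ψ x ∂m‖ₑ ^ 2 := by gcongr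
    _ ≤ fourierEnergy m * ∫⁻ x, ‖ψ x‖ₑ ^ 2 := enorm_integral_schwartz_sq_le m ψ
    _ ≤ fourierEnergy m * volume U := by gcongr

theorem absolutelyContinuous_of_fourierEnergy_ne_top (hm : fourierEnergy m ≠ ⊤) :
    m ≪ volume := by
  refine .mk fun s hs hs0 => ?_
  simp only [hs.measure_eq_iSup_isCompact, ENNReal.iSup_eq_zero]
  intro C hCs hC
  by_contra hmC
  have null_lt : volume C < m C ^ 2 / fourierEnergy m := by
    rw [measure_mono_null hCs hs0]
    exact ENNReal.div_pos (pow_ne_zero 2 hmC) hm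
  obtain ⟨U, hCU, hU, volume_lt⟩ := C.exists_isOpen_lt_of_lt _ null_lt
  exact (ENNReal.mul_lt_of_lt_div' volume_lt).not_ge
    (measure_sq_le_fourierEnergy_mul_of_isOpen m hC hU hCU)

end FourierEnergy

section FourierMeasure

variable {d : ℕ} (m m₁ m₂ : Measure (Fin d → ℝ))

theorem measConv_eq_conv : measConv m₁ m₂ = m₁ ∗ m₂ := rfl

theorem fourierMeasure_eq_charFun (ξ : Fin d → ℝ) :
    fourierMeasure m ξ = charFun (m.map (WithLp.toLp 2)) (-(2 * Real.pi) • WithLp.toLp 2 ξ) := by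
  rw [charFun_apply, integral_map (by fun_prop) (by fun_prop), fourierMeasure]
  congr with x
  rw [inner_smul_right, EuclideanSpace.inner_toLp_toLp]
  simp only [dotProduct, star_trivial, mul_comm (ξ _)]
  push_cast
  ring_nf

theorem fourierEnergy_map_toLp :
    fourierEnergy (m.map (WithLp.toLp 2)) = ∫⁻ ξ, ‖fourierMeasure m ξ‖ₑ ^ 2 := by
  simp only [fourierMeasure_eq_charFun]
  have toLp_preserving := (EuclideanSpace.volume_preserving_symm_measurableEquiv_toLp (Fin d)).symm
  exact (toLp_preserving.lintegral_comp_emb (MeasurableEquiv.measurableEmbedding _) _).symm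

theorem absolutelyContinuous_of_lintegral_fourierMeasure_sq_ne_top [IsFiniteMeasure m]
    (hm : ∫⁻ ξ, ‖fourierMeasure m ξ‖ₑ ^ 2 ≠ ⊤) : m ≪ volume := by
  rw [← fourierEnergy_map_toLp] at hm
  have hac := (absolutelyContinuous_of_fourierEnergy_ne_top _ hm).map
    (WithLp.measurable_ofLp 2 (Fin d → ℝ))
  rw [(PiLp.volume_preserving_ofLp (Fin d)).map_eq, Measure.map_map (by fun_prop) (by fun_prop)]
    at hac
  simpa [Function.comp_def] using hac

theorem measurable_fourierMeasure [SFinite m] : Measurable (fourierMeasure m) := by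
  simp only [funext (fourierMeasure_eq_charFun m)]
  fun_prop

theorem fourierMeasure_measConv [IsFiniteMeasure m₁] [IsFiniteMeasure m₂] (ξ : Fin d → ℝ) :
    fourierMeasure (measConv m₁ m₂) ξ = fourierMeasure m₁ ξ * fourierMeasure m₂ ξ := by
  simp only [fourierMeasure_eq_charFun, measConv_eq_conv, ← charFun_conv]
  have map_conv := Measure.map_conv_continuousLinearMap (μ := m₁) (ν := m₂)
    (PiLp.continuousLinearEquiv 2 ℝ (fun _ : Fin d => ℝ)).symm.toContinuousLinearMap
  exact congrArg (charFun · _) map_conv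

theorem fourierMeasure_map_mulVec (A : Matrix (Fin d) (Fin d) ℝ) (ξ : Fin d → ℝ) :
    fourierMeasure (m.map A.mulVec) ξ = fourierMeasure m (A.transpose.mulVec ξ) := by
  have adjoint (x : Fin d → ℝ) :
      ∑ i, A.mulVec x i * ξ i = ∑ i, x i * A.transpose.mulVec ξ i := by
    change A.mulVec x ⬝ᵥ ξ = x ⬝ᵥ A.transpose.mulVec ξ
    rw [Matrix.mulVec_transpose, dotProduct_comm, Matrix.dotProduct_mulVec, dotProduct_comm]
  have continuous_kernel : Continuous fun x : Fin d → ℝ =>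
      Complex.exp (-(2 * Real.pi * Complex.I * (∑ i, x i * ξ i))) := by fun_prop
  rw [fourierMeasure, integral_map (by fun_prop) continuous_kernel.aestronglyMeasurable,
    fourierMeasure]
  simp only [adjoint]

theorem fourierMeasure_map_smul (r : ℝ) (ξ : Fin d → ℝ) :
    fourierMeasure (m.map fun x => r • x) ξ = fourierMeasure m (r • ξ) := by
  have mulVec_eq : (r • 1 : Matrix (Fin d) (Fin d) ℝ).mulVec = fun x => r • x := by
    ext1 x
    rw [Matrix.smul_mulVec, Matrix.one_mulVec]
  rw [← mulVec_eq, fourierMeasure_map_mulVec, Matrix.transpose_smul, Matrix.transpose_one,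
    mulVec_eq]

theorem lintegral_enorm_sq_fourierMeasure_measConv_map_mulVec [IsFiniteMeasure m₁]
    [IsFiniteMeasure m₂] (A : Matrix (Fin d) (Fin d) ℝ) :
    ∫⁻ ξ, ‖fourierMeasure (measConv m₁ (m₂.map A.mulVec)) ξ‖ₑ ^ 2 = ∫⁻ ξ, ENNReal.ofReal
      (‖fourierMeasure m₁ ξ‖ ^ 2 * ‖fourierMeasure m₂ (A.transpose.mulVec ξ)‖ ^ 2) := by
  refine lintegral_congr fun ξ => ?_
  rw [fourierMeasure_measConv, fourierMeasure_map_mulVec, ← mul_pow, ← norm_mul,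
    ENNReal.ofReal_pow (norm_nonneg _), ofReal_norm]

end FourierMeasure

section Rotations

variable {d : ℕ}

instance : BorelSpace (Matrix (Fin d) (Fin d) ℝ) :=
  inferInstanceAs (BorelSpace (Fin d → Fin d → ℝ))

instance : SecondCountableTopology (Matrix (Fin d) (Fin d) ℝ) :=
  inferInstanceAs (SecondCountableTopology (Fin d → Fin d → ℝ))

instance : SecondCountableTopology (Matrix.orthogonalGroup (Fin d) ℝ) :=
  TopologicalSpace.Subtype.secondCountableTopology _

variable (α β : Measure (Fin d → ℝ))

/-- The kernel `θ ↦ α * β^θ` on the orthogonal group, built as the law of `x + θ y` for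
`(x, y)` distributed as `α × β`, so that its measurability in `θ` is automatic. -/
noncomputable def rotatedConvKernel : Kernel (Matrix.orthogonalGroup (Fin d) ℝ) (Fin d → ℝ) :=
  (Kernel.id ×ₖ Kernel.const _ (α.prod β)).map fun p => p.2.1 + p.1.1.mulVec p.2.2

theorem rotatedConvKernel_apply [SFinite α] [SFinite β]
    (θ : Matrix.orthogonalGroup (Fin d) ℝ) :
    rotatedConvKernel α β θ = measConv α (β.map θ.1.mulVec) := by
  have prod_map : α.prod (β.map θ.1.mulVec) = (α.prod β).map (Prod.map id θ.1.mulVec) := by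
    rw [← Measure.map_prod_map α β measurable_id (by fun_prop), Measure.map_id]
  rw [rotatedConvKernel, Kernel.map_apply _ (by fun_prop), Kernel.prod_apply, Kernel.id_apply,
    Kernel.const_apply, Measure.dirac_prod, Measure.map_map (by fun_prop) (by fun_prop), measConv,
    prod_map, Measure.map_map (by fun_prop) (by fun_prop)]
  rfl

instance [IsProbabilityMeasure α] [IsProbabilityMeasure β] :
    IsMarkovKernel (rotatedConvKernel α β) :=
  Kernel.IsMarkovKernel.map _ (by fun_prop)

theorem ae_rotatedConvKernel_absolutelyContinuous [IsFiniteMeasure α] [IsFiniteMeasure β]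
    (ν : Measure (Matrix.orthogonalGroup (Fin d) ℝ)) [SFinite ν] [ν.IsMulLeftInvariant]
    (hfin : ∫⁻ θ : Matrix.orthogonalGroup (Fin d) ℝ, ∫⁻ ξ, ENNReal.ofReal
      (‖fourierMeasure α ξ‖ ^ 2 * ‖fourierMeasure β (θ.1.mulVec ξ)‖ ^ 2) ∂volume ∂ν ≠ ⊤) :
    ∀ᵐ θ ∂ν, rotatedConvKernel α β θ ≪ volume := by
  have measurable_energy : Measurable fun θ : Matrix.orthogonalGroup (Fin d) ℝ =>
      ∫⁻ ξ, ENNReal.ofReal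
        (‖fourierMeasure α ξ‖ ^ 2 * ‖fourierMeasure β (θ.1.mulVec ξ)‖ ^ 2) := by
    have := measurable_fourierMeasure α
    have := measurable_fourierMeasure β
    fun_prop
  have ae_finite := (quasiMeasurePreserving_inv ν).ae (ae_lt_top measurable_energy hfin)
  filter_upwards [ae_finite] with θ hθ
  rw [rotatedConvKernel_apply, measConv_eq_conv]
  apply absolutelyContinuous_of_lintegral_fourierMeasure_sq_ne_top
  rw [← measConv_eq_conv, lintegral_enorm_sq_fourierMeasure_measConv_map_mulVec]
  exact hθ.ne

end Rotations

theorem exists_rotation_support_positive_measure_general {d : ℕ}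
    (α β : Measure (Fin d → ℝ)) [IsProbabilityMeasure α] [IsProbabilityMeasure β]
    (ν : Measure (Matrix.orthogonalGroup (Fin d) ℝ)) [IsProbabilityMeasure ν]
    [ν.IsMulLeftInvariant]
    (hfin : ∫⁻ θ : Matrix.orthogonalGroup (Fin d) ℝ, ∫⁻ ξ, ENNReal.ofReal
      (‖fourierMeasure α ξ‖ ^ 2 * ‖fourierMeasure β (θ.1.mulVec ξ)‖ ^ 2) ∂volume ∂ν ≠ ⊤) :
    ∃ θ : Matrix.orthogonalGroup (Fin d) ℝ,
      0 < volume (measureSupport (measConv α (β.map θ.1.mulVec))) ∧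
      1 ≤ volume (measureSupport (measConv α (β.map θ.1.mulVec))) *
        ∫⁻ θ' : Matrix.orthogonalGroup (Fin d) ℝ, ∫⁻ x,
          (measConv α (β.map θ'.1.mulVec)).rnDeriv volume x ^ 2 ∂volume ∂ν := by
  obtain ⟨θ, hθ⟩ := exists_one_le_measure_measureSupport_mul volume ν (rotatedConvKernel α β)
    (ae_rotatedConvKernel_absolutelyContinuous α β ν hfin)
  simp only [rotatedConvKernel_apply] at hθ
  refine ⟨θ, pos_iff_ne_zero.2 fun null_support => ?_, hθ⟩
  rw [null_support, zero_mul] at hθ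
  exact one_ne_zero (le_zero_iff.1 hθ)

theorem exists_rotation_support_positive_measure {d : ℕ} (hd : 1 ≤ d)
    (μ : Measure (Fin d → ℝ)) [IsProbabilityMeasure μ]
    (K : Set (Fin d → ℝ)) (hK : IsCompact K) (hμK : μ Kᶜ = 0)
    (r : ℝ) (hr : 0 < r)
    -- `ν` is the normalized Haar measure on the orthogonal group
    (ν : Measure (Matrix.orthogonalGroup (Fin d) ℝ)) [IsProbabilityMeasure ν]
    (hHaar : ∀ g₀ : Matrix.orthogonalGroup (Fin d) ℝ,
      Measure.map (fun g => g₀ * g) ν = ν)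
    (hfin : (∫⁻ θ : Matrix.orthogonalGroup (Fin d) ℝ, ∫⁻ ξ : Fin d → ℝ,
        ENNReal.ofReal (‖fourierMeasure μ (r • ξ)‖ ^ 2 *
          ‖fourierMeasure μ ((θ : Matrix (Fin d) (Fin d) ℝ).mulVec ξ)‖ ^ 2)
        ∂volume ∂ν) < ⊤) :
    ∃ θ : Matrix.orthogonalGroup (Fin d) ℝ,
      0 < volume (measureSupport (measConv (Measure.map (fun x => r • x) μ)
          (Measure.map (fun x => (θ : Matrix (Fin d) (Fin d) ℝ).mulVec x) μ))) ∧
      1 ≤ volume (measureSupport (measConv (Measure.map (fun x => r • x) μ)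
          (Measure.map (fun x => (θ : Matrix (Fin d) (Fin d) ℝ).mulVec x) μ))) *
        ∫⁻ θ' : Matrix.orthogonalGroup (Fin d) ℝ, ∫⁻ x : Fin d → ℝ,
          ((measConv (Measure.map (fun x => r • x) μ)
            (Measure.map (fun x => (θ' : Matrix (Fin d) (Fin d) ℝ).mulVec x) μ)).rnDeriv
              volume x) ^ 2 ∂volume ∂ν := by
  have : IsProbabilityMeasure (μ.map fun x => r • x) :=
    Measure.isProbabilityMeasure_map (by fun_prop)
  have : ν.IsMulLeftInvariant := ⟨hHaar⟩
  exact exists_rotation_support_positive_measure_general _ μ ν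
    (by simpa only [fourierMeasure_map_smul] using hfin.ne)
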